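/- arXiv:1501.00787 — 2 statements merged into one kernel-verified Lean document; each statement's English description precedes it below -/
import Mathlib

section
/- Let R be a ring Lie nilpotent of index n ≥ 2. Then the quotient ring R/rad(R) is commutative. -/
/-- Left-normed commutator: `lnc x [x₂,…,x_k] = [x, x₂, …, x_k]*`. -/
def lnc {R : Type*} [Ring R] (x : R) (l : List R) : R :=
  l.foldl (fun a y => a * y - y * a) x

/-!
Modulo a semiprime ideal, an element `u` all of whose commutators are central is itself central.
Indeed `⁅u, y * u⁆ = ⁅u, y⁆ * u`, and bracketing this with `y` gives `⁅u, y⁆ ^ 2 = 0`; a central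
element of square zero vanishes in a semiprime ring. Hence, modulo a semiprime ideal, the upper
central series stops at the centre.
-/

/-- A two-sided ideal `P` is semiprime if `x R x ⊆ P` implies `x ∈ P`. The elementwise form agrees
with the one used for prime ideals in the main theorem, and does not exclude `P = ⊤`. -/
def IsSemiprimeIdeal {R : Type*} [NonUnitalRing R] (P : TwoSidedIdeal R) : Prop :=
  ∀ x : R, (∀ r : R, x * r * x ∈ P) → x ∈ P

section NonUnitalRing

variable {R : Type*} [NonUnitalRing R] {P : TwoSidedIdeal R}

theorem IsSemiprimeIdeal.mem_of_lie_mem_of_mul_self_mem (hP : IsSemiprimeIdeal P) {c : R}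
    (hc : ∀ r : R, ⁅c, r⁆ ∈ P) (hsq : c * c ∈ P) : c ∈ P := by
  refine hP c fun r => ?_
  have hmem : ⁅c, r⁆ * c + r * (c * c) ∈ P :=
    P.add_mem (P.mul_mem_right _ c (hc r)) (P.mul_mem_left r _ hsq)
  have hcrc : c * r * c = ⁅c, r⁆ * c + r * (c * c) := by
    rw [Ring.lie_def]
    noncomm_ring
  rwa [hcrc]

theorem lie_mul_self_mem_of_lie_lie_mem {u : R} (hu : ∀ y z : R, ⁅⁅u, y⁆, z⁆ ∈ P) (y : R) :
    ⁅u, y⁆ * ⁅u, y⁆ ∈ P := by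
  have hmem : ⁅⁅u, y * u⁆, y⁆ - ⁅⁅u, y⁆, y⁆ * u ∈ P :=
    P.sub_mem (hu (y * u) y) (P.mul_mem_right _ u (hu y y))
  have hsq : ⁅u, y⁆ * ⁅u, y⁆ = ⁅⁅u, y * u⁆, y⁆ - ⁅⁅u, y⁆, y⁆ * u := by
    simp only [Ring.lie_def]
    noncomm_ring
  rwa [hsq]

theorem IsSemiprimeIdeal.lie_mem_of_lie_lie_mem (hP : IsSemiprimeIdeal P) {u : R}
    (hu : ∀ y z : R, ⁅⁅u, y⁆, z⁆ ∈ P) (y : R) : ⁅u, y⁆ ∈ P :=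
  hP.mem_of_lie_mem_of_mul_self_mem (hu y) (lie_mul_self_mem_of_lie_lie_mem hu y)

end NonUnitalRing

theorem lnc_cons {R : Type*} [Ring R] (x y : R) (l : List R) : lnc x (y :: l) = lnc ⁅x, y⁆ l :=
  rfl

theorem quotient_by_prime_radical_commutative_general {R : Type*} [Ring R] {P : TwoSidedIdeal R}
    (hP : IsSemiprimeIdeal P) (n : ℕ) (a : R) (ha : ∀ l : List R, l.length = n → lnc a l ∈ P)
    (b : R) : ⁅a, b⁆ ∈ P := by
  induction n generalizing a b with
  | zero =>
    have ha' : a ∈ P := ha [] rfl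
    exact P.sub_mem (P.mul_mem_right a b ha') (P.mul_mem_left b a ha')
  | succ n ih =>
    refine hP.lie_mem_of_lie_lie_mem (fun y => ih ⁅a, y⁆ fun l hl => ?_) b
    rw [← lnc_cons]
    exact ha (y :: l) (by rw [List.length_cons, hl])

/-- `R / rad(R)` is commutative, stated as: every additive commutator lies in the
prime radical (the intersection of all prime two-sided ideals). -/
theorem quotient_by_prime_radical_commutative {R : Type*} [Ring R] (n : ℕ) (hn : 2 ≤ n)
    (hLn : ∀ (x : R) (l : List R), l.length = n → lnc x l = 0)
    (a b : R) (P : TwoSidedIdeal R) (hP : P ≠ ⊤)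
    (hprime : ∀ x y : R, (∀ r : R, x * r * y ∈ P) → x ∈ P ∨ y ∈ P) :
    a * b - b * a ∈ P := by
  have hsemi : IsSemiprimeIdeal P := fun x hx => or_self_iff.mp (hprime x x hx)
  have hlnc (l : List R) (hl : l.length = n) : lnc a l ∈ P := hLn a l hl ▸ P.zero_mem
  exact quotient_by_prime_radical_commutative_general hsemi n a hlnc b
end

section
/- Let R be a unital ring, n ≥ 1, and C ⊆ R a commutative submonoid of the multiplicative monoid of R. Then the subring S of R generated by Z_n(R) ∪ C is Lie nilpotent of index n: [x₁,…,x_{n+1}]* = 0 for all x₁,…,x_{n+1} ∈ S. -/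
/-- The n-th Lie center of `R`. -/
def lieCenter (R : Type*) [Ring R] (n : ℕ) : Set R :=
  {r : R | ∀ l : List R, l.length = n → lnc r l = 0}

/-!
The point is that `⁅s, t⁆ ∈ Z_{n-1}(R)` for all `s, t ∈ S`. The cyclic identity
`⁅a * b, c⁆ = ⁅a, b * c⁆ + ⁅b, c * a⁆` has on its right-hand side brackets of `a` and of `b` with
elements of `S` as soon as `a, b, c ∈ S`, so it is enough to let `s` be a generator of `S`. For
`s ∈ Z_n(R)` there is nothing to prove. Let `s ∈ C`. Moving elements of `C` to the left past those
of `Z_n(R)` writes `t` as a sum of products `a * z` with `a` in the subring generated by `C` and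
`z ∈ Z_n(R)`. As `a` and `s` commute, `⁅s, a * z⁆ = -(a * ⁅z, s⁆)`, and such products lie in
`Z_{n-1}(R)` by induction on `n`.
-/

theorem mul_lie_eq_lie_mul_add_lie_mul {R : Type*} [NonUnitalRing R] (a b c : R) :
    ⁅a * b, c⁆ = ⁅a, b * c⁆ + ⁅b, c * a⁆ := by
  simp only [Ring.lie_def, mul_assoc, sub_add_sub_cancel]

theorem toSubmodule_adjoin_le {𝕜 A : Type*} [CommSemiring 𝕜] [Semiring A] [Algebra 𝕜 A]
    {s : Set A} {M : Submodule 𝕜 A} (h_one : 1 ∈ M) (h_mul : ∀ x ∈ s, ∀ m ∈ M, x * m ∈ M) :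
    (Algebra.adjoin 𝕜 s).toSubmodule ≤ M := by
  intro x hx
  suffices h : ∀ m ∈ M, x * m ∈ M by simpa using h 1 h_one
  induction hx using Algebra.adjoin_induction with
  | mem x hx => exact h_mul x hx
  | algebraMap r => exact fun m hm ↦ by simpa [← Algebra.smul_def] using M.smul_mem r hm
  | add x y _ _ hx hy => exact fun m hm ↦ by simpa [add_mul] using add_mem (hx m hm) (hy m hm)
  | mul x y _ _ hx hy => exact fun m hm ↦ by simpa [mul_assoc] using hx _ (hy m hm)

section LieCenterIdeal

attribute [local instance] LieRing.ofAssociativeRing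

variable (𝕜 : Type*) [CommRing 𝕜] {R : Type*} [Ring R] [Algebra 𝕜 R] {n : ℕ}

variable (R n) in
/-- The `n`-th Lie center of an associative `𝕜`-algebra, as the `n`-th term of the upper central
series of the Lie algebra given by the ring commutator. It gives `lieCenter R n` its structure of a
Lie ideal, and its elements do not depend on `𝕜`. -/
def lieCenterIdeal : LieIdeal 𝕜 R :=
  (⊥ : LieIdeal 𝕜 R).ucs n

theorem mem_lieCenterIdeal_succ {r : R} :
    r ∈ lieCenterIdeal 𝕜 R (n + 1) ↔ ∀ x : R, ⁅r, x⁆ ∈ lieCenterIdeal 𝕜 R n := by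
  rw [lieCenterIdeal, LieSubmodule.ucs_succ, LieSubmodule.mem_normalizer, ← lieCenterIdeal]
  exact forall_congr' fun x ↦ by rw [← lie_skew, neg_mem_iff]

theorem coe_lieCenterIdeal (n : ℕ) : (lieCenterIdeal 𝕜 R n : Set R) = lieCenter R n := by
  induction n with
  | zero => ext r; simp [lieCenterIdeal, lieCenter, lnc]
  | succ n ih =>
    ext r
    rw [SetLike.mem_coe, mem_lieCenterIdeal_succ]
    simp only [← SetLike.mem_coe, ih]
    constructor
    · rintro h (_ | ⟨x, l⟩) hl
      · cases hl
      · exact h x l (Nat.succ.inj hl)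
    · exact fun h x l hl ↦ h (x :: l) (congrArg Nat.succ hl)

variable {𝕜}

theorem one_mem_lieCenterIdeal_succ : (1 : R) ∈ lieCenterIdeal 𝕜 R (n + 1) := by
  simp [mem_lieCenterIdeal_succ, Ring.lie_def]

theorem mul_mem_lieCenterIdeal_succ {z w : R} (hz : z ∈ lieCenterIdeal 𝕜 R (n + 1))
    (hw : w ∈ lieCenterIdeal 𝕜 R (n + 1)) : z * w ∈ lieCenterIdeal 𝕜 R (n + 1) := by
  rw [mem_lieCenterIdeal_succ] at *
  exact fun x ↦ mul_lie_eq_lie_mul_add_lie_mul z w x ▸ add_mem (hz _) (hw _)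

theorem mul_lie_mem_lieCenterIdeal {z a c : R} (hz : z ∈ lieCenterIdeal 𝕜 R (n + 1))
    (hac : Commute a c) : a * ⁅z, c⁆ ∈ lieCenterIdeal 𝕜 R n := by
  induction n generalizing z a c with
  | zero =>
    have hzc : ⁅z, c⁆ = 0 := by simpa [lieCenterIdeal] using (mem_lieCenterIdeal_succ 𝕜).1 hz c
    simp [hzc]
  | succ n ih =>
    rw [mem_lieCenterIdeal_succ] at hz ⊢
    intro y
    -- Bracketing with `y` moves it into `z`, at the cost of exchanging `a` and `c`.
    have lie_eq : ⁅a * ⁅z, c⁆, y⁆ = ⁅⁅z, c⁆, y * a⁆ - ⁅⁅z, c * y⁆, a⁆ + c * ⁅⁅z, y⁆, a⁆ := by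
      have expand : ⁅a * ⁅z, c⁆, y⁆ =
          ⁅⁅z, c⁆, y * a⁆ - ⁅⁅z, c * y⁆, a⁆ + c * ⁅⁅z, y⁆, a⁆ + ⁅a, c⁆ * ⁅y, z⁆ := by
        simp only [Ring.lie_def]
        noncomm_ring
      rw [expand, hac.lie_eq, zero_mul, add_zero]
    rw [lie_eq]
    exact add_mem (sub_mem ((mem_lieCenterIdeal_succ 𝕜).1 (hz c) _)
      ((mem_lieCenterIdeal_succ 𝕜).1 (hz _) a)) (ih (hz y) hac.symm)

theorem adjoin_lieCenterIdeal_union_le_mul (C : Set R) :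
    (Algebra.adjoin 𝕜 (lieCenterIdeal 𝕜 R (n + 1) ∪ C)).toSubmodule ≤
      (Algebra.adjoin 𝕜 C).toSubmodule * (lieCenterIdeal 𝕜 R (n + 1)).toSubmodule := by
  set A := Algebra.adjoin 𝕜 C
  set Z := lieCenterIdeal 𝕜 R (n + 1)
  have mul_mem_mul {a z : R} (ha : a ∈ A) (hz : z ∈ Z) : a * z ∈ A.toSubmodule * Z.toSubmodule :=
    Submodule.mul_mem_mul ha hz
  refine toSubmodule_adjoin_le ?_ fun x hx m hm ↦ ?_
  · exact mul_one (1 : R) ▸ mul_mem_mul (one_mem A) one_mem_lieCenterIdeal_succ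
  induction hm using Submodule.mul_induction_on' with
  | add u _ v _ hu hv => exact mul_add x u v ▸ add_mem hu hv
  | mem_mul_mem a ha z hz =>
    obtain hx | hx := hx
    · have mul_eq : x * (a * z) = a * (x * z) + 1 * (⁅x, a⁆ * z) := by
        simp only [Ring.lie_def]
        noncomm_ring
      exact mul_eq ▸ add_mem (mul_mem_mul ha (mul_mem_lieCenterIdeal_succ hx hz))
        (mul_mem_mul (one_mem A) (mul_mem_lieCenterIdeal_succ (lie_mem_left 𝕜 R Z x a hx) hz))
    · exact mul_assoc x a z ▸ mul_mem_mul (mul_mem (Algebra.subset_adjoin hx) ha) hz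

theorem lie_mem_lieCenterIdeal_of_commute {C : Set R} {x y : R} (hx : ∀ a ∈ C, Commute x a)
    (hy : y ∈ Algebra.adjoin 𝕜 (lieCenterIdeal 𝕜 R (n + 1) ∪ C)) :
    ⁅x, y⁆ ∈ lieCenterIdeal 𝕜 R n := by
  replace hy := adjoin_lieCenterIdeal_union_le_mul C hy
  induction hy using Submodule.mul_induction_on' with
  | add u _ v _ hu hv => exact lie_add x u v ▸ add_mem hu hv
  | mem_mul_mem a ha z hz =>
    have hxa : Commute x a := Algebra.commute_of_mem_adjoin_of_forall_mem_commute ha hx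
    have lie_mul_eq : ⁅x, a * z⁆ = -(a * ⁅z, x⁆) := by
      simp only [Ring.lie_def, mul_sub, neg_sub, ← mul_assoc, hxa.eq]
    exact lie_mul_eq ▸ neg_mem (mul_lie_mem_lieCenterIdeal hz hxa.symm)

theorem lie_mem_lieCenterIdeal_of_mem_adjoin {C : Set R} (hC : ∀ a ∈ C, ∀ b ∈ C, Commute a b)
    {x y : R} (hx : x ∈ Algebra.adjoin 𝕜 (lieCenterIdeal 𝕜 R (n + 1) ∪ C))
    (hy : y ∈ Algebra.adjoin 𝕜 (lieCenterIdeal 𝕜 R (n + 1) ∪ C)) :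
    ⁅x, y⁆ ∈ lieCenterIdeal 𝕜 R n := by
  induction hx using Algebra.adjoin_induction generalizing y with
  | mem x hx =>
    obtain hx | hx := hx
    · exact (mem_lieCenterIdeal_succ 𝕜).1 hx y
    · exact lie_mem_lieCenterIdeal_of_commute (hC x hx) hy
  | algebraMap r => simp [Ring.lie_def, Algebra.commutes]
  | add u v _ _ hu hv => exact add_lie u v y ▸ add_mem (hu hy) (hv hy)
  | mul u v hu_mem hv_mem hu hv =>
    exact mul_lie_eq_lie_mul_add_lie_mul u v y ▸
      add_mem (hu (mul_mem hv_mem hy)) (hv (mul_mem hy hu_mem))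

end LieCenterIdeal

theorem subring_gen_lieCenter_and_comm_monoid_lie_nilpotent_general {R : Type*} [Ring R] {n : ℕ}
    {C : Set R} (hC : ∀ a ∈ C, ∀ b ∈ C, Commute a b) {x y : R}
    (hx : x ∈ Subring.closure (lieCenter R (n + 1) ∪ C))
    (hy : y ∈ Subring.closure (lieCenter R (n + 1) ∪ C)) : ⁅x, y⁆ ∈ lieCenter R n := by
  rw [← mem_subalgebraOfSubring, ← Algebra.adjoin_int, ← coe_lieCenterIdeal ℤ] at hx hy
  rw [← coe_lieCenterIdeal ℤ]
  exact lie_mem_lieCenterIdeal_of_mem_adjoin hC hx hy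

theorem subring_gen_lieCenter_and_comm_monoid_lie_nilpotent {R : Type*} [Ring R]
    (n : ℕ) (hn : 1 ≤ n) (C : Submonoid R) (hC : ∀ a ∈ C, ∀ b ∈ C, a * b = b * a)
    (x : R) (l : List R)
    (hx : x ∈ Subring.closure (lieCenter R n ∪ (C : Set R)))
    (hl : ∀ y ∈ l, y ∈ Subring.closure (lieCenter R n ∪ (C : Set R)))
    (hlen : l.length = n) :
    lnc x l = 0 := by
  obtain ⟨m, rfl⟩ := Nat.exists_eq_add_of_le' hn
  obtain ⟨y, l, rfl⟩ := List.exists_cons_of_length_eq_add_one hlen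
  exact subring_gen_lieCenter_and_comm_monoid_lie_nilpotent_general hC hx
    (hl y List.mem_cons_self) l (Nat.succ.inj hlen)
end
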